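/- For every τ in the upper half-plane with J(τ) ≠ 0 and J(τ) ≠ 1 (so that J'(τ) ≠ 0 and E6(τ) ≠ 0), the logarithmic derivative of E6 satisfies E6'(τ)/E6(τ) = 3 J''(τ)/J'(τ) − 2 J'(τ)/J(τ) − J'(τ)/(J(τ) − 1). -/

import Mathlib

open Complex Filter Topology

noncomputable section

/-- The nome `q = e^{2πiτ}`. -/
def qq (τ : ℂ) : ℂ := Complex.exp (2 * Real.pi * Complex.I * τ)

/-- The Eisenstein series `E₄(τ) = 1 + 240 Σ_{n≥1} σ₃(n) qⁿ`. -/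
def E4 (τ : ℂ) : ℂ := 1 + 240 * ∑' n : ℕ, (∑ d ∈ (n + 1).divisors, (d : ℂ) ^ 3) * qq τ ^ (n + 1)

/-- The Eisenstein series `E₆(τ) = 1 − 504 Σ_{n≥1} σ₅(n) qⁿ`. -/
def E6 (τ : ℂ) : ℂ := 1 - 504 * ∑' n : ℕ, (∑ d ∈ (n + 1).divisors, (d : ℂ) ^ 5) * qq τ ^ (n + 1)

/-- The normalized elliptic modular function `J = E₄³ / (E₄³ − E₆²)`. -/
def J (τ : ℂ) : ℂ := E4 τ ^ 3 / (E4 τ ^ 3 - E6 τ ^ 2)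

/-- The Dedekind eta function `η(τ) = e^{πiτ/12} ∏_{n≥1} (1 − qⁿ)`. -/
def dedekindEta (τ : ℂ) : ℂ := Complex.exp (Real.pi * Complex.I * τ / 12) * ∏' n : ℕ, (1 - qq τ ^ (n + 1))

/-- The elliptic point `ρ = e^{2πi/3}`. -/
def rho : ℂ := Complex.exp (2 * Real.pi * Complex.I / 3)

/-!
Serre's derivative sends modular forms of weight `k` to modular forms of weight `k + 2`. A level one
form of weight less than `12` is determined by its value at `i∞`, so comparing these values gives
Ramanujan's identities for `E₄'` and `E₆'`. In `J'` the terms with the quasimodular `E₂` cancel,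
leaving `J' = -2πi E₄² E₆ / (E₄³ - E₆²)`. Since `J = E₄³ / (E₄³ - E₆²)` and
`J - 1 = E₆² / (E₄³ - E₆²)`, cubing removes `E₄`: `J'³ = (-2πi)³ J² (J - 1) E₆`, whose logarithmic
derivative is the formula.
-/

section

open UpperHalfPlane hiding I J
open ModularForm EisensteinSeries Derivative
open scoped MatrixGroups Manifold ModularForm

theorem tendsto_atImInfty_of_hasSum_qExpansion {f : ℍ → ℂ} {c : ℕ → ℂ} {h : ℝ} (hh : 0 < h)
    (hf : ∀ τ : ℍ, HasSum (fun m ↦ c m • Function.Periodic.qParam h τ ^ m) (f τ)) :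
    Tendsto f atImInfty (𝓝 (c 0)) := by
  let q : ℍ → ℂ := fun τ ↦ Function.Periodic.qParam h τ
  let g : ℍ → ℂ := fun τ ↦ (f τ - c 0) / q τ
  have hq : ∀ τ, q τ ≠ 0 := fun τ ↦ Function.Periodic.qParam_ne_zero _
  have hg : ∀ τ, HasSum (fun m ↦ c (m + 1) • q τ ^ m) (g τ) := fun τ ↦ by
    have := ((hasSum_nat_add_iff' 1).mpr (hf τ)).div_const (q τ)
    simpa [pow_succ, g, q, mul_div_assoc, hq τ] using this
  have hg_bdd : IsBoundedAtImInfty g := isBoundedAtImInfty_of_hasSum_qExpansion hh hg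
  have hqg : Tendsto (fun τ ↦ q τ * g τ) atImInfty (𝓝 0) :=
    ZeroAtFilter.mul_boundedAtFilter (qParam_tendsto_atImInfty hh) hg_bdd
  simpa [g, hq, mul_div_cancel₀] using hqg.add_const (c 0)

theorem tendsto_E2_atImInfty : Tendsto E2 atImInfty (𝓝 1) := by
  have h := tendsto_atImInfty_of_hasSum_qExpansion (f := E2) one_pos fun τ ↦ by
    simpa only [Function.Periodic.qParam, ofReal_one, div_one] using hasSum_qExpansion_E2 (z := τ)
  simpa using h

theorem tendsto_atImInfty_qExpansion_coeff_zero {F : Type*} [FunLike F ℍ ℂ]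
    {Γ : Subgroup (GL (Fin 2) ℝ)} {k : ℤ} [ModularFormClass F Γ k] [Fact (IsCusp .infty Γ)]
    (f : F) {h : ℝ} (hh : 0 < h) (hΓ : h ∈ Γ.strictPeriods) :
    Tendsto f atImInfty (𝓝 ((qExpansion h f).coeff 0)) :=
  tendsto_atImInfty_of_hasSum_qExpansion hh (ModularForm.hasSum_qExpansion f hh hΓ)

theorem tendsto_levelOne_atImInfty {k : ℤ} (f : ModularForm 𝒮ℒ k) :
    Tendsto f atImInfty (𝓝 ((qExpansion 1 f).coeff 0)) :=
  tendsto_atImInfty_qExpansion_coeff_zero f one_pos one_mem_strictPeriods_SL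

theorem eq_of_tendsto_atImInfty_of_weight_lt_twelve {k : ℤ} (hk : k < 12)
    {f g : ModularForm 𝒮ℒ k} {a : ℂ} (hf : Tendsto f atImInfty (𝓝 a))
    (hg : Tendsto g atImInfty (𝓝 a)) : f = g := by
  have h0 : (qExpansion 1 ⇑(f - g)).coeff 0 = 0 :=
    tendsto_nhds_unique (tendsto_levelOne_atImInfty (f - g)) (by simpa using! hf.sub hg)
  refine sub_eq_zero.mp (sturm_bound_levelOne ?_)
  rw [Nat.div_eq_of_lt (by lia), Nat.cast_zero, ← Order.one_le_iff_pos,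
    PowerSeries.one_le_order_iff_constCoeff_eq_zero,
    ← PowerSeries.coeff_zero_eq_constantCoeff_apply, h0]

theorem norm_deriv_comp_ofComplex_le {F : ℍ → ℂ} (hF : MDiff F) {A M : ℝ}
    (hM : ∀ w : ℍ, A ≤ w.im → ‖F w‖ ≤ M) {z : ℍ} (hz : 2 * A ≤ z.im) :
    ‖deriv (F ∘ ofComplex) z‖ ≤ M / (z.im / 2) := by
  have him : ∀ w ∈ Metric.closedBall (z : ℂ) (z.im / 2), z.im / 2 ≤ w.im := fun w hw ↦ by
    have h := neg_le_of_abs_le <|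
      (abs_im_le_norm (w - z)).trans (mem_closedBall_iff_norm.mp hw)
    rw [sub_im, coe_im] at h
    linarith
  have hpos : ∀ w ∈ Metric.closedBall (z : ℂ) (z.im / 2), 0 < w.im := fun w hw ↦
    (half_pos z.im_pos).trans_le (him w hw)
  refine norm_deriv_le_of_forall_mem_sphere_norm_le (half_pos z.im_pos)
    (((UpperHalfPlane.mdifferentiable_iff.mp hF).mono hpos).diffContOnCl_ball subset_rfl)
    fun w hw ↦ ?_
  have hw := Metric.sphere_subset_closedBall hw
  rw [Function.comp_apply, ofComplex_apply_of_im_pos (hpos w hw)]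
  exact hM _ (by rw [mk_im]; linarith [him w hw])

theorem isZeroAtImInfty_normalizedDerivOfComplex {F : ℍ → ℂ} (hF : MDiff F)
    (hb : IsBoundedAtImInfty F) : IsZeroAtImInfty (D F) := by
  obtain ⟨M, A, hM⟩ := isBoundedAtImInfty_iff.mp hb
  have him : Tendsto (fun z : ℍ ↦ M / (z.im / 2)) atImInfty (𝓝 0) :=
    (tendsto_comap.atTop_div_const two_pos).const_div_atTop M
  have hderiv : Tendsto (fun z : ℍ ↦ deriv (F ∘ ofComplex) z) atImInfty (𝓝 0) :=
    squeeze_zero_norm' ((atImInfty_mem _).mpr ⟨2 * A, fun z hz ↦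
      norm_deriv_comp_ofComplex_le hF hM hz⟩) him
  simpa only [mul_zero] using! hderiv.const_mul (2 * Real.pi * I)⁻¹

theorem tendsto_serreDerivative_atImInfty {F : ℍ → ℂ} (hF : MDiff F) {a : ℂ}
    (ha : Tendsto F atImInfty (𝓝 a)) (k : ℂ) :
    Tendsto (serreDerivative k F) atImInfty (𝓝 (-(k / 12) * a)) := by
  have hD : Tendsto (D F) atImInfty (𝓝 0) :=
    isZeroAtImInfty_normalizedDerivOfComplex hF (ha.isBigO_one ℝ)
  convert! hD.sub ((tendsto_E2_atImInfty.const_mul (k * 12⁻¹)).mul ha) using 2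
  ring

theorem serreDerivative_slash_eq {k : ℤ} (f : ModularForm 𝒮ℒ k) (γ : SL(2, ℤ)) :
    serreDerivative k f ∣[k + 2] γ = serreDerivative k f :=
  serreDerivative_slash_invariant f.holo' (f.slash_action_eq' _ ⟨γ, rfl⟩)

/-- The Serre derivative `D f - (k / 12) E₂ f` of a level one modular form of weight `k`, as a
modular form of weight `k + 2`. -/
def serreDerivativeForm {k : ℤ} (f : ModularForm 𝒮ℒ k) : ModularForm 𝒮ℒ (k + 2) where
  toFun := serreDerivative k f
  slash_action_eq' A hA := by
    obtain ⟨γ, rfl⟩ := hA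
    exact serreDerivative_slash_eq f γ
  holo' := serreDerivative_mdifferentiable _ f.holo'
  bdd_at_cusps' hc := by
    rw [Subgroup.IsArithmetic.isCusp_iff_isCusp_SL2Z] at hc
    rw [OnePoint.isBoundedAt_iff_forall_SL2Z hc]
    intro γ _
    rw [serreDerivative_slash_eq]
    exact (tendsto_serreDerivative_atImInfty f.holo' (tendsto_levelOne_atImInfty f) k).isBigO_one ℝ

theorem tendsto_E_atImInfty {k : ℕ} (hk : 3 ≤ k) (hk2 : Even k) :
    Tendsto (E hk) atImInfty (𝓝 1) :=
  E_qExpansion_coeff_zero hk hk2 ▸ tendsto_levelOne_atImInfty (E hk)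

theorem serreDerivative_E₄ : serreDerivative 4 E₄ = (-(1 / 3) : ℂ) • ⇑E₆ := by
  have h4 := tendsto_serreDerivative_atImInfty E₄.holo' (tendsto_E_atImInfty _ ⟨2, rfl⟩) 4
  have h6 := (tendsto_E_atImInfty (by norm_num : 3 ≤ 6) ⟨3, rfl⟩).const_smul (-(1 / 3) : ℂ)
  have h : serreDerivativeForm E₄ = (-(1 / 3) : ℂ) • E₆ :=
    eq_of_tendsto_atImInfty_of_weight_lt_twelve (by norm_num) h4 (by convert! h6 using 2; norm_num)
  exact congrArg (⇑) h

theorem serreDerivative_E₆ : serreDerivative 6 E₆ = (-(1 / 2) : ℂ) • ⇑E₄ ^ 2 := by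
  have h6 := tendsto_serreDerivative_atImInfty E₆.holo' (tendsto_E_atImInfty _ ⟨3, rfl⟩) 6
  have h4 := ((tendsto_E_atImInfty (by norm_num : 3 ≤ 4) ⟨2, rfl⟩).pow 2).const_smul (-(1 / 2) : ℂ)
  have h : serreDerivativeForm E₆ = (-(1 / 2) : ℂ) • (E₄.pow 2).mcast (by norm_num) :=
    eq_of_tendsto_atImInfty_of_weight_lt_twelve (by norm_num) h6 (by convert! h4 using 2; norm_num)
  exact congrArg (⇑) h

theorem E_eq_one_sub_tsum_qq {k : ℕ} (hk : 3 ≤ k) (hk2 : Even k) (z : ℍ) :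
    E hk z = 1 - 2 * k / bernoulli k *
      ∑' n : ℕ, (∑ d ∈ (n + 1).divisors, (d : ℂ) ^ (k - 1)) * qq z ^ (n + 1) := by
  rw [q_expansion_bernoulli hk hk2]
  simp only [zpow_natCast]
  rw [tsum_pnat_eq_tsum_succ (f := fun n ↦
    (ArithmeticFunction.sigma (k - 1) n : ℂ) * cexp (2 * Real.pi * I * z) ^ n)]
  simp only [ArithmeticFunction.sigma_apply, Nat.cast_sum, Nat.cast_pow, qq]

theorem E4_eq_E₄ (z : ℍ) : E4 z = E₄ z := by
  rw [E_eq_one_sub_tsum_qq _ ⟨2, rfl⟩, show bernoulli 4 = -1 / 30 by decide +kernel, E4]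
  norm_num

theorem E6_eq_E₆ (z : ℍ) : E6 z = E₆ z := by
  rw [E_eq_one_sub_tsum_qq _ ⟨3, rfl⟩, show bernoulli 6 = 1 / 42 by decide +kernel, E6]
  norm_num

theorem eqOn_comp_ofComplex {α : Type*} {f : ℂ → α} {F : ℍ → α} (h : ∀ z : ℍ, f z = F z) :
    Set.EqOn f (F ∘ ofComplex) upperHalfPlaneSet := fun τ hτ ↦ by
  rw [Function.comp_apply, ofComplex_apply_of_im_pos hτ, ← h]

theorem deriv_eq_two_pi_I_mul_normalizedDerivOfComplex {f : ℂ → ℂ} {F : ℍ → ℂ}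
    (h : ∀ z : ℍ, f z = F z) (z : ℍ) : deriv f z = 2 * Real.pi * I * D F z := by
  rw [normalizedDerivOfComplex, mul_inv_cancel_left₀ two_pi_I_ne_zero]
  exact ((eqOn_comp_ofComplex h).eventuallyEq_of_mem
    (isOpen_upperHalfPlaneSet.mem_nhds z.im_pos)).deriv_eq

theorem deriv_E4 (z : ℍ) : deriv E4 z = 2 * Real.pi * I * ((E2 z * E4 z - E6 z) / 3) := by
  have h : D E₄ z - 4 * 12⁻¹ * E2 z * E₄ z = -(1 / 3) * E₆ z := congrFun serreDerivative_E₄ z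
  rw [deriv_eq_two_pi_I_mul_normalizedDerivOfComplex E4_eq_E₄, E4_eq_E₄, E6_eq_E₆]
  linear_combination 2 * Real.pi * I * h

theorem deriv_E6 (z : ℍ) : deriv E6 z = 2 * Real.pi * I * ((E2 z * E6 z - E4 z ^ 2) / 2) := by
  have h : D E₆ z - 6 * 12⁻¹ * E2 z * E₆ z = -(1 / 2) * E₄ z ^ 2 := congrFun serreDerivative_E₆ z
  rw [deriv_eq_two_pi_I_mul_normalizedDerivOfComplex E6_eq_E₆, E4_eq_E₄, E6_eq_E₆]
  linear_combination 2 * Real.pi * I * h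

theorem differentiableOn_E4 : DifferentiableOn ℂ E4 upperHalfPlaneSet :=
  (UpperHalfPlane.mdifferentiable_iff.mp E₄.holo').congr (eqOn_comp_ofComplex E4_eq_E₄)

theorem differentiableOn_E6 : DifferentiableOn ℂ E6 upperHalfPlaneSet :=
  (UpperHalfPlane.mdifferentiable_iff.mp E₆.holo').congr (eqOn_comp_ofComplex E6_eq_E₆)

theorem E4_cube_sub_E6_sq_ne_zero (z : ℍ) : E4 z ^ 3 - E6 z ^ 2 ≠ 0 := fun h ↦
  discriminant_ne_zero z <| by
    rw [discriminant_eq_E₄_cube_sub_E₆_sq, ← E4_eq_E₄, ← E6_eq_E₆, h, zero_div]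

theorem differentiableOn_J : DifferentiableOn ℂ J upperHalfPlaneSet :=
  (differentiableOn_E4.pow 3).div ((differentiableOn_E4.pow 3).sub (differentiableOn_E6.pow 2))
    fun τ hτ ↦ E4_cube_sub_E6_sq_ne_zero ⟨τ, hτ⟩

theorem J_sub_one (z : ℍ) : J z - 1 = E6 z ^ 2 / (E4 z ^ 3 - E6 z ^ 2) := by
  rw [J, div_sub_one (E4_cube_sub_E6_sq_ne_zero z), sub_sub_cancel]

theorem deriv_J (z : ℍ) :
    deriv J z = -(2 * Real.pi * I) * (E4 z ^ 2 * E6 z / (E4 z ^ 3 - E6 z ^ 2)) := by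
  have h4 := (differentiableOn_E4.differentiableAt
    (isOpen_upperHalfPlaneSet.mem_nhds z.im_pos)).hasDerivAt
  have h6 := (differentiableOn_E6.differentiableAt
    (isOpen_upperHalfPlaneSet.mem_nhds z.im_pos)).hasDerivAt
  have hne := E4_cube_sub_E6_sq_ne_zero z
  have hJ : HasDerivAt J _ z := (h4.pow 3).div ((h4.pow 3).sub (h6.pow 2)) hne
  rw [hJ.deriv, deriv_E4, deriv_E6]
  simp only [Pi.pow_apply]
  field_simp
  push_cast
  ring

theorem deriv_J_cube (z : ℍ) :
    deriv J z ^ 3 = (-(2 * Real.pi * I)) ^ 3 * (J z ^ 2 * (J z - 1) * E6 z) := by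
  rw [deriv_J, J_sub_one, J]
  ring

end

theorem three_mul_logDeriv_of_pow_three_eventuallyEq {𝕜 : Type*} [NontriviallyNormedField 𝕜]
    {u f g : 𝕜 → 𝕜} {c x : 𝕜} (hu : DifferentiableAt 𝕜 u x) (hf : DifferentiableAt 𝕜 f x)
    (hg : DifferentiableAt 𝕜 g x) (hc : c ≠ 0) (hf0 : f x ≠ 0) (hf1 : f x ≠ 1) (hg0 : g x ≠ 0)
    (h : ∀ᶠ y in 𝓝 x, u y ^ 3 = c * (f y ^ 2 * (f y - 1) * g y)) :
    3 * logDeriv u x = 2 * logDeriv f x + deriv f x / (f x - 1) + logDeriv g x := by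
  have hf1' : f x - 1 ≠ 0 := sub_ne_zero.mpr hf1
  have hf2 : f x ^ 2 ≠ 0 := pow_ne_zero 2 hf0
  calc 3 * logDeriv u x = logDeriv (fun y ↦ u y ^ 3) x := by
        rw [logDeriv_fun_pow hu, Nat.cast_ofNat]
    _ = logDeriv (fun y ↦ c * (f y ^ 2 * (f y - 1) * g y)) x := (logDeriv_congr_nhds h).eq_of_nhds
    _ = logDeriv (fun y ↦ f y ^ 2 * (f y - 1) * g y) x := logDeriv_const_mul x c hc
    _ = logDeriv (fun y ↦ f y ^ 2 * (f y - 1)) x + logDeriv g x :=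
        logDeriv_mul x (mul_ne_zero hf2 hf1') hg0 (by fun_prop) hg
    _ = logDeriv (fun y ↦ f y ^ 2) x + logDeriv (fun y ↦ f y - 1) x + logDeriv g x := by
        rw [logDeriv_mul x hf2 hf1' (by fun_prop) (by fun_prop)]
    _ = 2 * logDeriv f x + deriv f x / (f x - 1) + logDeriv g x := by
        rw [logDeriv_fun_pow hf, Nat.cast_ofNat, logDeriv_apply (fun y ↦ f y - 1),
          deriv_sub_const]

/-- For `τ ∈ ℍ` with `J(τ) ∉ {0,1}`, `J'(τ) ≠ 0`, `E₆(τ) ≠ 0` and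
`E₆'/E₆ = 3 J''/J' − 2 J'/J − J'/(J−1)`. -/
theorem E6_log_deriv_formula (τ : ℂ) (hτ : 0 < τ.im) (h0 : J τ ≠ 0) (h1 : J τ ≠ 1) :
    deriv J τ ≠ 0 ∧ E6 τ ≠ 0 ∧
    deriv E6 τ / E6 τ =
      3 * (iteratedDeriv 2 J τ / deriv J τ) - 2 * (deriv J τ / J τ) -
        deriv J τ / (J τ - 1) := by
  have hE6_ne : E6 τ ≠ 0 := fun h ↦ h1 <| sub_eq_zero.mp <| by
    rw [J_sub_one ⟨τ, hτ⟩, h, zero_pow two_ne_zero, zero_div]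
  have hc : (-(2 * Real.pi * I)) ^ 3 ≠ 0 := pow_ne_zero 3 (neg_ne_zero.mpr two_pi_I_ne_zero)
  have hJ'_ne : deriv J τ ≠ 0 := by
    rw [← pow_ne_zero_iff three_ne_zero, deriv_J_cube ⟨τ, hτ⟩]
    exact mul_ne_zero hc (mul_ne_zero (mul_ne_zero (pow_ne_zero 2 h0) (sub_ne_zero.mpr h1)) hE6_ne)
  have hopen := UpperHalfPlane.isOpen_upperHalfPlaneSet
  have hnhds := hopen.mem_nhds hτ
  have hlog := three_mul_logDeriv_of_pow_three_eventuallyEq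
    ((differentiableOn_J.deriv hopen).differentiableAt hnhds)
    (differentiableOn_J.differentiableAt hnhds) (differentiableOn_E6.differentiableAt hnhds)
    hc h0 h1 hE6_ne (by filter_upwards [hnhds] with w hw using deriv_J_cube ⟨w, hw⟩)
  simp only [logDeriv_apply] at hlog
  rw [iteratedDeriv_succ, iteratedDeriv_one]
  exact ⟨hJ'_ne, hE6_ne, by linear_combination -hlog⟩
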